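/- arXiv:2510.01535 — 9 statements merged into one kernel-verified Lean document; each statement's English description precedes it below -/
import Mathlib

section
/- The conditional mean degenerates to the lower endpoint: lim_{w→∞} E_w[z] = u, where E_w[z] = ∫_u^ū z g_w(z) dz. -/
open MeasureTheory Real Filter

/-!
Put `L = log w`. The excess of the conditional mean over `u` is the quotient of
`∫ (z - u) e^{-zL} f` by `∫ e^{-zL} f`. The bounds `c ≤ f ≤ C` compare both integrals with
elementary ones: the numerator is at most `C e^{-uL} / L²` (`integral_sub_mul_exp_le`), while the
denominator is at least `c e^{-uL} / (2L)` once `(ubar - u) L ≥ 1` (`exp_div_le_integral_exp`).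
Hence the excess lies between `0` and `2C / (cL)`, which tends to `0`.
-/

lemma integral_sub_mul_exp_le {u v L : ℝ} (huv : u ≤ v) (hL : 0 < L) :
    ∫ z in u..v, (z - u) * exp (-z * L) ≤ exp (-u * L) / L ^ 2 := by
  have hd : ∀ z ∈ Set.uIcc u v,
      HasDerivAt (fun z : ℝ => -((z - u) / L + 1 / L ^ 2) * exp (-z * L))
        ((z - u) * exp (-z * L)) z := by
    intro z _
    have h1 : HasDerivAt (fun z : ℝ => exp (-z * L)) (exp (-z * L) * (-1 * L)) z :=
      (((hasDerivAt_id z).neg).mul_const L).exp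
    have h2 : HasDerivAt (fun z : ℝ => -((z - u) / L + 1 / L ^ 2)) (-(1 / L)) z :=
      ((((hasDerivAt_id z).sub_const u).div_const L).add_const _).neg
    refine (h2.mul h1).congr_deriv ?_
    field_simp
    ring
  rw [intervalIntegral.integral_eq_sub_of_hasDerivAt hd
    (Continuous.intervalIntegrable (by fun_prop) _ _)]
  have h : 0 ≤ ((v - u) / L + 1 / L ^ 2) * exp (-v * L) := by
    have := sub_nonneg.2 huv
    positivity
  have e : -((u - u) / L + 1 / L ^ 2) * exp (-u * L) = -(exp (-u * L) / L ^ 2) := by ring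
  rw [e]
  linarith

/-- Once `(v - u) L ≥ 1`, at least half of `∫_u^∞ e^{-zL} dz` is carried by `[u, v]`. -/
lemma exp_div_le_integral_exp {u v L : ℝ} (hL : 0 < L) (h : 1 ≤ (v - u) * L) :
    exp (-u * L) / (2 * L) ≤ ∫ z in u..v, exp (-z * L) := by
  have hd : ∀ z ∈ Set.uIcc u v,
      HasDerivAt (fun z : ℝ => -(exp (-z * L) / L)) (exp (-z * L)) z := by
    intro z _
    have h1 : HasDerivAt (fun z : ℝ => exp (-z * L)) (exp (-z * L) * (-1 * L)) z :=
      (((hasDerivAt_id z).neg).mul_const L).exp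
    refine (h1.div_const L).neg.congr_deriv ?_
    field_simp
  rw [intervalIntegral.integral_eq_sub_of_hasDerivAt hd
    (Continuous.intervalIntegrable (by fun_prop) _ _)]
  have h2 : 2 * exp (-v * L) ≤ exp (-u * L) := by
    have e : exp (-u * L) = exp ((v - u) * L) * exp (-v * L) := by
      rw [← exp_add]; congr 1; ring
    rw [e]
    have := add_one_le_exp ((v - u) * L)
    gcongr
    linarith
  have e : -(exp (-v * L) / L) - -(exp (-u * L) / L)
      = (2 * exp (-u * L) - 2 * exp (-v * L)) / (2 * L) := by
    field_simp
    ring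
  rw [e]
  gcongr
  linarith

/-- Theorem 1 of the paper (conditional mean): the conditional mean of `Z`
given `Y > w` degenerates to the lower endpoint `u` as `w → ∞`. -/
theorem tail_index_conditional_mean_degenerates
    (u ubar c C : ℝ) (h0u : 0 < u) (huu : u < ubar) (h0c : 0 < c) (hcC : c ≤ C)
    (f : ℝ → ℝ) (hf_meas : Measurable f)
    (hf_supp : ∀ z, z ∉ Set.Icc u ubar → f z = 0)
    (hf_int : (∫ z in u..ubar, f z) = 1)
    (hf_lb : ∀ z ∈ Set.Icc u ubar, c ≤ f z)
    (hf_ub : ∀ z ∈ Set.Icc u ubar, f z ≤ C) :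
    Filter.Tendsto
      (fun w : ℝ => ∫ z in u..ubar,
        z * (Real.exp (-z * Real.log w) * f z /
          (∫ t in u..ubar, Real.exp (-t * Real.log w) * f t)))
      Filter.atTop (nhds u) := by
  -- A non-integrable `f` would have the default integral `0`, contradicting `hf_int`.
  have hfi : IntervalIntegrable f volume u ubar := by
    by_contra h
    rw [intervalIntegral.integral_undef h] at hf_int
    exact zero_ne_one hf_int
  have key : ∀ L : ℝ, 0 < L → 1 ≤ (ubar - u) * L →
      u ≤ (∫ z in u..ubar, z * (exp (-z * L) * f z / ∫ t in u..ubar, exp (-t * L) * f t)) ∧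
      (∫ z in u..ubar, z * (exp (-z * L) * f z / ∫ t in u..ubar, exp (-t * L) * f t))
        ≤ u + 2 * C / c * L⁻¹ := by
    intro L hL h1
    have hiD : IntervalIntegrable (fun z => exp (-z * L) * f z) volume u ubar :=
      hfi.continuousOn_mul (by fun_prop)
    have hiN : IntervalIntegrable (fun z => (z - u) * (exp (-z * L) * f z)) volume u ubar :=
      hiD.continuousOn_mul (by fun_prop)
    set D := ∫ t in u..ubar, exp (-t * L) * f t with hD
    set N := ∫ z in u..ubar, (z - u) * (exp (-z * L) * f z) with hN
    have hDlb : c * (exp (-u * L) / (2 * L)) ≤ D := by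
      refine (mul_le_mul_of_nonneg_left (exp_div_le_integral_exp hL h1) h0c.le).trans ?_
      rw [← intervalIntegral.integral_const_mul]
      refine intervalIntegral.integral_mono_on huu.le
        (Continuous.intervalIntegrable (by fun_prop) _ _) hiD fun z hz => ?_
      rw [mul_comm]
      exact mul_le_mul_of_nonneg_left (hf_lb z hz) (exp_pos _).le
    have hDpos : 0 < D := lt_of_lt_of_le (by positivity) hDlb
    have hN0 : 0 ≤ N := intervalIntegral.integral_nonneg huu.le fun z hz =>
      mul_nonneg (sub_nonneg.2 hz.1) (mul_nonneg (exp_pos _).le (h0c.le.trans (hf_lb z hz)))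
    have hNub : N ≤ C * (exp (-u * L) / L ^ 2) := by
      refine le_trans ?_ (mul_le_mul_of_nonneg_left (integral_sub_mul_exp_le huu.le hL)
        (h0c.le.trans hcC))
      rw [← intervalIntegral.integral_const_mul]
      refine intervalIntegral.integral_mono_on huu.le hiN
        (Continuous.intervalIntegrable (by fun_prop) _ _) fun z hz => ?_
      have := mul_le_mul_of_nonneg_left (hf_ub z hz)
        (mul_nonneg (sub_nonneg.2 hz.1) (exp_pos (-z * L)).le)
      linarith
    have hE : (∫ z in u..ubar, z * (exp (-z * L) * f z / D)) = u + N / D := by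
      have e : (fun z => z * (exp (-z * L) * f z / D))
          = fun z => ((z - u) * (exp (-z * L) * f z) + u * (exp (-z * L) * f z)) / D := by
        funext z; ring
      rw [e, intervalIntegral.integral_div, intervalIntegral.integral_add hiN (hiD.const_mul u),
        intervalIntegral.integral_const_mul, ← hD, ← hN]
      field_simp
      ring
    rw [hE]
    refine ⟨le_add_of_nonneg_right (div_nonneg hN0 hDpos.le), ?_⟩
    gcongr
    rw [div_le_iff₀ hDpos]
    have hC : 0 < C := h0c.trans_le hcC
    calc N ≤ C * (exp (-u * L) / L ^ 2) := hNub
      _ = 2 * C / c * L⁻¹ * (c * (exp (-u * L) / (2 * L))) := by field_simp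
      _ ≤ 2 * C / c * L⁻¹ * D := by gcongr
  have hev : ∀ᶠ w : ℝ in atTop, 0 < log w ∧ 1 ≤ (ubar - u) * log w :=
    (tendsto_log_atTop.eventually_gt_atTop 0).and
      ((tendsto_log_atTop.const_mul_atTop (sub_pos.2 huu)).eventually_ge_atTop 1)
  have hlim : Tendsto (fun w : ℝ => u + 2 * C / c * (log w)⁻¹) atTop (nhds u) := by
    simpa using ((tendsto_inv_atTop_zero.comp tendsto_log_atTop).const_mul
      (2 * C / c)).const_add u
  exact tendsto_of_tendsto_of_tendsto_of_le_of_le' tendsto_const_nhds hlim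
    (hev.mono fun w hw => (key _ hw.1 hw.2).1) (hev.mono fun w hw => (key _ hw.1 hw.2).2)
end

section
/- The conditional variance degenerates: lim_{w→∞} Var_w(z) = 0, where Var_w(z) = ∫_u^ū z² g_w(z) dz − (∫_u^ū z g_w(z) dz)². -/
open MeasureTheory Real Filter

/-!
Write `L = log w`. The variance is at most the second moment about any fixed point, in particular
about the left endpoint `u`, and it is nonnegative, being the second moment about the mean
(`integral_sq_sub_mul`). The tilt `exp (-z L)` concentrates the mass near `u` at scale `1 / L`:
since `(z - u)² ≤ (8 / L²) exp (L (z - u) / 2)`, half of the exponential decay absorbs the square,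
and the remaining integral of `exp (-(L / 2) (z - u))` is comparable to the normalizing constant
because `c ≤ f ≤ C`. This gives the explicit bound `16 C / (c L²)` for the second moment about `u`
(`integral_sq_sub_mul_tilt_le`), so the variance is `O(1 / log² w)`.
-/

lemma integral_exp_neg_mul_sub (u v a : ℝ) (ha : 0 < a) :
    (∫ z in u..v, Real.exp (-(a * (z - u)))) = (1 - Real.exp (-(a * (v - u)))) / a := by
  have h : ∀ z ∈ Set.uIcc u v,
      HasDerivAt (fun z => -Real.exp (-(a * (z - u))) / a) (Real.exp (-(a * (z - u)))) z := by
    intro z _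
    have h1 : HasDerivAt (fun z : ℝ => -(a * (z - u))) (-(a * 1)) z :=
      (((hasDerivAt_id z).sub_const u).const_mul a).neg
    refine (h1.exp.neg.div_const a).congr_deriv ?_
    field_simp
  rw [intervalIntegral.integral_eq_sub_of_hasDerivAt h
    ((by fun_prop : Continuous fun z => Real.exp (-(a * (z - u)))).intervalIntegrable _ _)]
  simp
  ring

/-- Expansion of the second moment about an arbitrary point `a` for a function of integral `1`. -/
lemma integral_sq_sub_mul (u v a : ℝ) (g : ℝ → ℝ) (hg : IntervalIntegrable g volume u v)
    (hg1 : (∫ z in u..v, g z) = 1) :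
    (∫ z in u..v, (z - a) ^ 2 * g z) =
      (∫ z in u..v, z ^ 2 * g z) - 2 * a * (∫ z in u..v, z * g z) + a ^ 2 := by
  have h2 : IntervalIntegrable (fun z => z ^ 2 * g z) volume u v :=
    hg.continuousOn_mul (by fun_prop)
  have h1 : IntervalIntegrable (fun z => z * g z) volume u v :=
    hg.continuousOn_mul (by fun_prop)
  have e : ∀ z, (z - a) ^ 2 * g z = z ^ 2 * g z - 2 * a * (z * g z) + a ^ 2 * g z := by
    intro z; ring
  simp_rw [e]
  rw [intervalIntegral.integral_add (h2.sub (h1.const_mul _)) (hg.const_mul _),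
    intervalIntegral.integral_sub h2 (h1.const_mul _), intervalIntegral.integral_const_mul,
    intervalIntegral.integral_const_mul, hg1, mul_one]

/-- Laplace-type estimate: the tilted mass is positive, and the tilted second moment about the
left endpoint `u` is at most `16 C / (c L²)` times it. -/
lemma integral_sq_sub_mul_tilt_le (u v c C L : ℝ) (huv : u < v) (hc : 0 < c) (hcC : c ≤ C)
    (hL : 0 < L) (f : ℝ → ℝ) (hf : IntervalIntegrable f volume u v)
    (hlb : ∀ z ∈ Set.Icc u v, c ≤ f z) (hub : ∀ z ∈ Set.Icc u v, f z ≤ C) :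
    0 < (∫ z in u..v, Real.exp (-z * L) * f z) ∧
    (∫ z in u..v, (z - u) ^ 2 * (Real.exp (-z * L) * f z)) ≤
      16 * C / (c * L ^ 2) * (∫ z in u..v, Real.exp (-z * L) * f z) := by
  have hk : IntervalIntegrable (fun z => Real.exp (-z * L) * f z) volume u v :=
    hf.continuousOn_mul (by fun_prop)
  have hN : IntervalIntegrable (fun z => (z - u) ^ 2 * (Real.exp (-z * L) * f z)) volume u v :=
    hk.continuousOn_mul (by fun_prop)
  have hD : c * Real.exp (-u * L) * ((1 - Real.exp (-(L * (v - u)))) / L) ≤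
      ∫ z in u..v, Real.exp (-z * L) * f z := by
    rw [← integral_exp_neg_mul_sub u v L hL, ← intervalIntegral.integral_const_mul]
    refine intervalIntegral.integral_mono_on huv.le
      (Continuous.intervalIntegrable (by fun_prop) _ _) hk fun z hz => ?_
    have : Real.exp (-u * L) * Real.exp (-(L * (z - u))) = Real.exp (-z * L) := by
      rw [← Real.exp_add]; ring_nf
    rw [mul_assoc, this, mul_comm]
    exact mul_le_mul_of_nonneg_left (hlb z hz) (Real.exp_pos _).le
  have hM : (∫ z in u..v, (z - u) ^ 2 * (Real.exp (-z * L) * f z)) ≤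
      8 * C / L ^ 2 * Real.exp (-u * L) * ((1 - Real.exp (-(L / 2 * (v - u)))) / (L / 2)) := by
    rw [← integral_exp_neg_mul_sub u v (L / 2) (by positivity),
      ← intervalIntegral.integral_const_mul]
    refine intervalIntegral.integral_mono_on huv.le hN
      (Continuous.intervalIntegrable (by fun_prop) _ _) fun z hz => ?_
    have hzu : 0 ≤ z - u := sub_nonneg.2 hz.1
    have hx : 0 ≤ L / 2 * (z - u) := by positivity
    have hq : (z - u) ^ 2 ≤ 8 / L ^ 2 * Real.exp (L / 2 * (z - u)) := by
      have := Real.quadratic_le_exp_of_nonneg hx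
      rw [div_mul_eq_mul_div, le_div_iff₀ (by positivity)]
      nlinarith
    have he : Real.exp (L / 2 * (z - u)) * Real.exp (-z * L) =
        Real.exp (-u * L) * Real.exp (-(L / 2 * (z - u))) := by
      rw [← Real.exp_add, ← Real.exp_add]; ring_nf
    calc (z - u) ^ 2 * (Real.exp (-z * L) * f z)
        ≤ (8 / L ^ 2 * Real.exp (L / 2 * (z - u))) * (Real.exp (-z * L) * C) := by
          have := hub z hz
          have := hc.le.trans (hlb z hz)
          gcongr
      _ = 8 * C / L ^ 2 * (Real.exp (L / 2 * (z - u)) * Real.exp (-z * L)) := by ring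
      _ = _ := by rw [he]; ring
  have hvu : 0 < v - u := sub_pos.2 huv
  have hlt : Real.exp (-(L * (v - u))) < 1 := by
    rw [Real.exp_lt_one_iff]
    have : 0 < L * (v - u) := by positivity
    linarith
  have hmono : Real.exp (-(L * (v - u))) ≤ Real.exp (-(L / 2 * (v - u))) := by
    apply Real.exp_le_exp.2
    nlinarith [mul_pos hL hvu]
  have hC : 0 < C := hc.trans_le hcC
  refine ⟨lt_of_lt_of_le ?_ hD, hM.trans ?_⟩
  · have := sub_pos.2 hlt
    positivity
  · refine le_trans ?_ (mul_le_mul_of_nonneg_left hD (by positivity))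
    calc _ = 16 * C / L ^ 3 * Real.exp (-u * L) * (1 - Real.exp (-(L / 2 * (v - u)))) := by
          field_simp; ring
      _ ≤ 16 * C / L ^ 3 * Real.exp (-u * L) * (1 - Real.exp (-(L * (v - u)))) := by gcongr
      _ = _ := by field_simp


/-- Theorem 1 of the paper (conditional variance): the conditional variance of
`Z` given `Y > w` degenerates to `0` as `w → ∞`. -/
theorem tail_index_conditional_variance_degenerates
    (u ubar c C : ℝ) (h0u : 0 < u) (huu : u < ubar) (h0c : 0 < c) (hcC : c ≤ C)
    (f : ℝ → ℝ) (hf_meas : Measurable f)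
    (hf_supp : ∀ z, z ∉ Set.Icc u ubar → f z = 0)
    (hf_int : (∫ z in u..ubar, f z) = 1)
    (hf_lb : ∀ z ∈ Set.Icc u ubar, c ≤ f z)
    (hf_ub : ∀ z ∈ Set.Icc u ubar, f z ≤ C) :
    Filter.Tendsto
      (fun w : ℝ =>
        (∫ z in u..ubar,
          z ^ 2 * (Real.exp (-z * Real.log w) * f z /
            (∫ t in u..ubar, Real.exp (-t * Real.log w) * f t))) -
        (∫ z in u..ubar,
          z * (Real.exp (-z * Real.log w) * f z /
            (∫ t in u..ubar, Real.exp (-t * Real.log w) * f t))) ^ 2)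
      Filter.atTop (nhds 0) := by
  have hf : IntervalIntegrable f volume u ubar :=
    intervalIntegral.intervalIntegrable_of_integral_ne_zero (by rw [hf_int]; exact one_ne_zero)
  have hlim : Tendsto (fun w : ℝ => 16 * C / (c * Real.log w ^ 2)) atTop (nhds 0) :=
    Tendsto.div_atTop tendsto_const_nhds
      (((tendsto_pow_atTop two_ne_zero).comp Real.tendsto_log_atTop).const_mul_atTop h0c)
  refine tendsto_of_tendsto_of_tendsto_of_le_of_le' tendsto_const_nhds hlim ?_ ?_ <;>
    filter_upwards [eventually_gt_atTop 1] with w hw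
  all_goals
    have hL := Real.log_pos hw
    obtain ⟨hD, hN⟩ := integral_sq_sub_mul_tilt_le u ubar c C _ huu h0c hcC hL f hf hf_lb hf_ub
    set L := Real.log w
    set D := ∫ t in u..ubar, Real.exp (-t * L) * f t with hDdef
    have hg : IntervalIntegrable (fun z => Real.exp (-z * L) * f z / D) volume u ubar :=
      (hf.continuousOn_mul (by fun_prop)).div_const _
    have hg1 : (∫ z in u..ubar, Real.exp (-z * L) * f z / D) = 1 := by
      rw [intervalIntegral.integral_div, ← hDdef, div_self hD.ne']
  · -- The variance is the second moment about the mean `m`.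
    set m := ∫ z in u..ubar, z * (Real.exp (-z * L) * f z / D)
    have hm := integral_sq_sub_mul u ubar m _ hg hg1
    have h0 : 0 ≤ ∫ z in u..ubar, (z - m) ^ 2 * (Real.exp (-z * L) * f z / D) := by
      refine intervalIntegral.integral_nonneg huu.le fun z hz => ?_
      have := h0c.le.trans (hf_lb z hz)
      positivity
    nlinarith
  · have hu := integral_sq_sub_mul u ubar u _ hg hg1
    have hle : (∫ z in u..ubar, (z - u) ^ 2 * (Real.exp (-z * L) * f z / D)) ≤
        16 * C / (c * L ^ 2) := by
      simp_rw [← mul_div_assoc] at hN ⊢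
      rw [intervalIntegral.integral_div, div_le_iff₀ hD]
      exact hN
    nlinarith [sq_nonneg ((∫ z in u..ubar, z * (Real.exp (-z * L) * f z / D)) - u)]
end

section
/- The conditional moments of the logarithm degenerate: lim_{w→∞} E_w[log z] = log u and lim_{w→∞} Var_w(log z) = 0, where E_w[log z] = ∫_u^ū (log z) g_w(z) dz and Var_w(log z) = E_w[(log z)²] − (E_w[log z])². -/
/-!
After the substitution `L = log w`, the tilted density `g_w(z) = exp (-z * L) * f z / D L` has total
mass one, and it is a family of peak functions at the left endpoint `u`: for `z ≥ u + 2 * δ` the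
numerator is at most `C * exp (-(u + 2 * δ) * L)`, whereas restricting the normalizing integral `D L`
to `[u, u + δ]` gives `D L ≥ δ * c * exp (-(u + δ) * L)` (`tilted_mass_lower_bound`), so
`g_w(z) ≤ C / (c * δ) * exp (-δ * L) → 0` uniformly there. Hence `E_w[h] → h u` for every `h`
continuous on `[u, ubar]` (`tendsto_tilted_mean`). The theorem follows by taking `h = log` and
`h = log ^ 2`.
-/

open MeasureTheory Real Filter

lemma intervalIntegrable_tilted {u ubar c C : ℝ} (huu : u < ubar) (h0c : 0 < c)
    {f : ℝ → ℝ} (hf_meas : Measurable f)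
    (hf_lb : ∀ z ∈ Set.Icc u ubar, c ≤ f z) (hf_ub : ∀ z ∈ Set.Icc u ubar, f z ≤ C) (L : ℝ) :
    IntervalIntegrable (fun z => Real.exp (-z * L) * f z) volume u ubar := by
  have hf : IntervalIntegrable f volume u ubar := by
    rw [intervalIntegrable_iff_integrableOn_Icc_of_le huu.le]
    refine Measure.integrableOn_of_bounded (M := C) measure_Icc_lt_top.ne
      hf_meas.aestronglyMeasurable ?_
    filter_upwards [self_mem_ae_restrict measurableSet_Icc] with z hz
    rw [Real.norm_of_nonneg (h0c.le.trans (hf_lb z hz))]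
    exact hf_ub z hz
  exact hf.continuousOn_mul (by fun_prop)

/-- The normalizing constant is bounded below by the contribution of `[u, u + δ]`. -/
lemma tilted_mass_lower_bound {u ubar c C : ℝ} (huu : u < ubar) (h0c : 0 < c)
    {f : ℝ → ℝ} (hf_meas : Measurable f)
    (hf_lb : ∀ z ∈ Set.Icc u ubar, c ≤ f z) (hf_ub : ∀ z ∈ Set.Icc u ubar, f z ≤ C)
    {δ L : ℝ} (hδ : 0 < δ) (hδu : u + δ ≤ ubar) (hL : 0 ≤ L) :
    δ * (Real.exp (-(u + δ) * L) * c) ≤ ∫ t in u..ubar, Real.exp (-t * L) * f t := by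
  have hint := intervalIntegrable_tilted huu h0c hf_meas hf_lb hf_ub L
  have hle : u ≤ u + δ := by linarith
  have hint' : IntervalIntegrable (fun z => Real.exp (-z * L) * f z) volume u (u + δ) := by
    refine hint.mono_set ?_
    rw [Set.uIcc_of_le hle, Set.uIcc_of_le huu.le]
    exact Set.Icc_subset_Icc_right hδu
  calc δ * (Real.exp (-(u + δ) * L) * c)
      = ∫ _ in u..(u + δ), Real.exp (-(u + δ) * L) * c := by
        rw [intervalIntegral.integral_const, add_sub_cancel_left, smul_eq_mul]
    _ ≤ ∫ t in u..(u + δ), Real.exp (-t * L) * f t := by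
        refine intervalIntegral.integral_mono_on hle (by simp) hint' fun t ht => ?_
        have h1 : Real.exp (-(u + δ) * L) ≤ Real.exp (-t * L) :=
          Real.exp_le_exp.2 (mul_le_mul_of_nonneg_right (by linarith [ht.2]) hL)
        exact mul_le_mul h1 (hf_lb t ⟨ht.1, ht.2.trans hδu⟩) h0c.le (Real.exp_pos _).le
    _ ≤ ∫ t in u..ubar, Real.exp (-t * L) * f t := by
        refine intervalIntegral.integral_mono_interval le_rfl hle hδu ?_ hint
        filter_upwards [self_mem_ae_restrict measurableSet_Ioc] with t ht
        exact mul_nonneg (Real.exp_pos _).le (h0c.le.trans (hf_lb t ⟨ht.1.le, ht.2⟩))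

/-- The tilted densities concentrate at `u`: the tilted mean of a function continuous on
`[u, ubar]` converges to its value at `u`. -/
lemma tendsto_tilted_mean {u ubar c C : ℝ} (huu : u < ubar) (h0c : 0 < c)
    {f : ℝ → ℝ} (hf_meas : Measurable f)
    (hf_lb : ∀ z ∈ Set.Icc u ubar, c ≤ f z) (hf_ub : ∀ z ∈ Set.Icc u ubar, f z ≤ C)
    {h : ℝ → ℝ} (hh : ContinuousOn h (Set.Icc u ubar)) :
    Tendsto (fun L : ℝ => ∫ z in u..ubar, h z * (Real.exp (-z * L) * f z /
      (∫ t in u..ubar, Real.exp (-t * L) * f t))) atTop (nhds (h u)) := by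
  set D : ℝ → ℝ := fun L => ∫ t in u..ubar, Real.exp (-t * L) * f t with hD
  have hlb : ∀ {δ L : ℝ}, 0 < δ → u + δ ≤ ubar → 0 ≤ L →
      δ * (Real.exp (-(u + δ) * L) * c) ≤ D L :=
    tilted_mass_lower_bound huu h0c hf_meas hf_lb hf_ub
  have hDpos : ∀ L, 0 ≤ L → 0 < D L := fun L hL => by
    have h1 : 0 < ubar - u := by linarith
    exact lt_of_lt_of_le (by positivity) (hlb h1 (by linarith) hL)
  have hnn : ∀ L, 0 ≤ L → ∀ z ∈ Set.Icc u ubar, 0 ≤ Real.exp (-z * L) * f z / D L :=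
    fun L hL z hz =>
      div_nonneg (mul_nonneg (Real.exp_pos _).le (h0c.le.trans (hf_lb z hz))) (hDpos L hL).le
  have hu_mem : u ∈ Set.Icc u ubar := Set.left_mem_Icc.2 huu.le
  have key := tendsto_setIntegral_peak_smul_of_integrableOn_of_tendsto (μ := volume) (l := atTop)
    (s := Set.Icc u ubar) (t := Set.Icc u ubar) (x₀ := u) (a := h u) (g := h)
    (φ := fun L z => Real.exp (-z * L) * f z / D L)
    measurableSet_Icc measurableSet_Icc subset_rfl self_mem_nhdsWithin measure_Icc_lt_top.ne
    ((eventually_ge_atTop 0).mono hnn) ?_ ?_ ?_ hh.integrableOn_Icc (hh u hu_mem)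
  · refine key.congr fun L => ?_
    rw [intervalIntegral.integral_of_le huu.le, ← integral_Icc_eq_integral_Ioc]
    simp only [smul_eq_mul, mul_comm (h _), hD]
  · intro V hV huV
    obtain ⟨ε, hε, hball⟩ := Metric.isOpen_iff.1 hV u huV
    -- `δ` is small enough that both `[u, u + δ] ⊆ [u, ubar]` and `[u, u + 2 * δ) ⊆ V`.
    obtain ⟨δ, hδ, hδε, hδu⟩ : ∃ δ : ℝ, 0 < δ ∧ 2 * δ ≤ ε ∧ u + δ ≤ ubar :=
      ⟨min (ε / 2) (ubar - u), lt_min (by linarith) (by linarith),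
        by linarith [min_le_left (ε / 2) (ubar - u)],
        by linarith [min_le_right (ε / 2) (ubar - u)]⟩
    have hlim : Tendsto (fun L : ℝ => C / (c * δ) * Real.exp (-(δ * L))) atTop (nhds 0) := by
      have h1 : Tendsto (fun L : ℝ => δ * L) atTop atTop := tendsto_id.const_mul_atTop hδ
      simpa using (Real.tendsto_exp_neg_atTop_nhds_zero.comp h1).const_mul (C / (c * δ))
    rw [Metric.tendstoUniformlyOn_iff]
    intro η hη
    filter_upwards [hlim.eventually_lt_const hη, eventually_ge_atTop 0] with L hLη hL z hz
    rw [Pi.zero_apply, dist_zero_left, Real.norm_of_nonneg (hnn L hL z hz.1)]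
    refine lt_of_le_of_lt ?_ hLη
    have hz2 : u + 2 * δ ≤ z := by
      by_contra! hlt
      refine hz.2 (hball ?_)
      rw [Metric.mem_ball, Real.dist_eq, abs_of_nonneg (by linarith [hz.1.1])]
      linarith
    have hC : 0 ≤ C := h0c.le.trans ((hf_lb z hz.1).trans (hf_ub z hz.1))
    rw [div_le_iff₀ (hDpos L hL)]
    calc Real.exp (-z * L) * f z
        ≤ Real.exp (-(δ * L) + -(u + δ) * L) * C := by
          refine mul_le_mul (Real.exp_le_exp.2 ?_) (hf_ub z hz.1)
            (h0c.le.trans (hf_lb z hz.1)) (Real.exp_pos _).le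
          nlinarith
      _ = C / (c * δ) * Real.exp (-(δ * L)) * (δ * (Real.exp (-(u + δ) * L) * c)) := by
          rw [Real.exp_add]
          field_simp
      _ ≤ C / (c * δ) * Real.exp (-(δ * L)) * D L :=
          mul_le_mul_of_nonneg_left (hlb hδ hδu hL) (by positivity)
  · refine tendsto_const_nhds.congr' ?_
    filter_upwards [eventually_ge_atTop 0] with L hL
    rw [integral_div, integral_Icc_eq_integral_Ioc, ← intervalIntegral.integral_of_le huu.le]
    exact (div_self (hDpos L hL).ne').symm
  · refine Eventually.of_forall fun L => Measurable.aestronglyMeasurable ?_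
    fun_prop

/-- Lemma 1 of the paper: the conclusions of Theorem 1 transfer to
`X₁ = log Z`: the conditional mean of `log Z` given `Y > w` converges to
`log u` and the conditional variance of `log Z` converges to `0`. -/
theorem tail_index_conditional_log_moments_degenerate
    (u ubar c C : ℝ) (h0u : 0 < u) (huu : u < ubar) (h0c : 0 < c) (hcC : c ≤ C)
    (f : ℝ → ℝ) (hf_meas : Measurable f)
    (hf_supp : ∀ z, z ∉ Set.Icc u ubar → f z = 0)
    (hf_int : (∫ z in u..ubar, f z) = 1)
    (hf_lb : ∀ z ∈ Set.Icc u ubar, c ≤ f z)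
    (hf_ub : ∀ z ∈ Set.Icc u ubar, f z ≤ C) :
    Filter.Tendsto
      (fun w : ℝ => ∫ z in u..ubar,
        Real.log z * (Real.exp (-z * Real.log w) * f z /
          (∫ t in u..ubar, Real.exp (-t * Real.log w) * f t)))
      Filter.atTop (nhds (Real.log u)) ∧
    Filter.Tendsto
      (fun w : ℝ =>
        (∫ z in u..ubar,
          (Real.log z) ^ 2 * (Real.exp (-z * Real.log w) * f z /
            (∫ t in u..ubar, Real.exp (-t * Real.log w) * f t))) -
        (∫ z in u..ubar,
          Real.log z * (Real.exp (-z * Real.log w) * f z /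
            (∫ t in u..ubar, Real.exp (-t * Real.log w) * f t))) ^ 2)
      Filter.atTop (nhds 0) := by
  have hlog : ContinuousOn Real.log (Set.Icc u ubar) :=
    Real.continuousOn_log.mono fun z hz => (h0u.trans_le hz.1).ne'
  have h1 := (tendsto_tilted_mean huu h0c hf_meas hf_lb hf_ub hlog).comp Real.tendsto_log_atTop
  have h2 := (tendsto_tilted_mean huu h0c hf_meas hf_lb hf_ub (hlog.pow 2)).comp
    Real.tendsto_log_atTop
  refine ⟨h1, ?_⟩
  have h3 := h2.sub (h1.pow 2)
  rw [Pi.pow_apply, sub_self] at h3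
  exact h3
end

section
/- In the uniform case, the conditional mean satisfies the asymptotic expansion E_w[z] = u + 1/(log w) + o(1/(log w)) as w → ∞; equivalently, lim_{w→∞} (log w)·(E_w[z] − u) = 1. -/
/-! Writing `L = log w` and `D = ubar - u`, both integrals are elementary, and the tilted mean is
exactly `L * (E_w[z] - u) = 1 - L * D * exp (-(L * D)) / (1 - exp (-(L * D)))` for `L > 0`
(`tilted_mean_eq`). The correction tends to `0` as `L → ∞`, since `x * exp (-x) → 0`.
-/

open MeasureTheory Real Filter

lemma integral_exp_neg_mul (u v L : ℝ) (hL : L ≠ 0) :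
    ∫ t in u..v, exp (-t * L) = (exp (-u * L) - exp (-v * L)) / L := by
  have h : ∀ t ∈ Set.uIcc u v, HasDerivAt (fun t => -(exp (-t * L)) / L) (exp (-t * L)) t := by
    intro t _
    have h1 : HasDerivAt (fun t : ℝ => -t * L) (-1 * L) t := (hasDerivAt_id t).neg.mul_const L
    refine ((h1.exp.neg).div_const L).congr_deriv ?_
    field_simp
  rw [intervalIntegral.integral_eq_sub_of_hasDerivAt h
    (Continuous.intervalIntegrable (by fun_prop) _ _)]
  ring

lemma integral_id_mul_exp_neg_mul (u v L : ℝ) (hL : L ≠ 0) :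
    ∫ t in u..v, t * exp (-t * L) =
      (u / L + 1 / L ^ 2) * exp (-u * L) - (v / L + 1 / L ^ 2) * exp (-v * L) := by
  have h : ∀ t ∈ Set.uIcc u v,
      HasDerivAt (fun t => -((t / L + 1 / L ^ 2) * exp (-t * L))) (t * exp (-t * L)) t := by
    intro t _
    have h1 : HasDerivAt (fun t : ℝ => -t * L) (-1 * L) t := (hasDerivAt_id t).neg.mul_const L
    have h2 : HasDerivAt (fun t : ℝ => t / L + 1 / L ^ 2) (1 / L) t :=
      ((hasDerivAt_id t).div_const L).add_const _
    refine (h2.mul h1.exp).neg.congr_deriv ?_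
    field_simp
    ring
  rw [intervalIntegral.integral_eq_sub_of_hasDerivAt h
    (Continuous.intervalIntegrable (by fun_prop) _ _)]
  ring

/-- Closed form of the rescaled excess mean of the density proportional to `exp (-z * L)` on
`[u, v]`; any nonzero constant value `c` of the untilted density cancels. -/
lemma tilted_mean_eq (u v L c : ℝ) (huv : u < v) (hL : 0 < L) (hc : c ≠ 0) :
    L * ((∫ z in u..v, z * (exp (-z * L) * c / (∫ t in u..v, exp (-t * L) * c))) - u) =
      1 - L * (v - u) * exp (-(L * (v - u))) / (1 - exp (-(L * (v - u)))) := by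
  have hfun : ∀ I : ℝ, (fun z : ℝ => z * (exp (-z * L) * c / I)) =
      fun z => (z * exp (-z * L)) * (c / I) := by
    intro I; funext z; ring
  rw [hfun, intervalIntegral.integral_mul_const, intervalIntegral.integral_mul_const,
    integral_exp_neg_mul u v L hL.ne', integral_id_mul_exp_neg_mul u v L hL.ne']
  have hv : exp (-v * L) = exp (-u * L) * exp (-(L * (v - u))) := by
    rw [← exp_add]; congr 1; ring
  have hq : exp (-(L * (v - u))) < 1 := by
    rw [exp_lt_one_iff]
    have := mul_pos hL (sub_pos.2 huv)
    linarith
  rw [hv]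
  have he := (exp_pos (-u * L)).ne'
  generalize exp (-u * L) = e at *
  generalize exp (-(L * (v - u))) = q at *
  have hq1 : 1 - q ≠ 0 := by linarith
  have hL' := hL.ne'
  have hden : e - e * q = e * (1 - q) := by ring
  rw [hden]
  field_simp
  ring

/-- Corollary 1 of the paper (mean asymptotics): in the uniform case,
`E_w[z] = u + 1/log w + o(1/log w)` as `w → ∞`; equivalently
`lim_{w→∞} (log w)·(E_w[z] − u) = 1`. -/
theorem tail_index_uniform_conditional_mean_asymptotics
    (u ubar : ℝ) (h0u : 0 < u) (huu : u < ubar) :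
    let f : ℝ → ℝ := fun z => if u ≤ z ∧ z ≤ ubar then (ubar - u)⁻¹ else 0
    Filter.Tendsto
      (fun w : ℝ =>
        Real.log w *
          ((∫ z in u..ubar,
            z * (Real.exp (-z * Real.log w) * f z /
              (∫ t in u..ubar, Real.exp (-t * Real.log w) * f t))) - u))
      Filter.atTop (nhds 1) := by
  intro f
  have hD : 0 < ubar - u := sub_pos.2 huu
  have hf : ∀ z ∈ Set.uIcc u ubar, f z = (ubar - u)⁻¹ := by
    intro z hz
    rw [Set.uIcc_of_le huu.le] at hz
    exact if_pos hz
  have hx : Tendsto (fun w : ℝ => log w * (ubar - u)) atTop atTop :=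
    tendsto_log_atTop.atTop_mul_const hD
  have hlim : Tendsto (fun x : ℝ => 1 - x * exp (-x) / (1 - exp (-x))) atTop (nhds 1) := by
    have h1 : Tendsto (fun x : ℝ => x * exp (-x)) atTop (nhds 0) := by
      simpa using tendsto_pow_mul_exp_neg_atTop_nhds_zero 1
    have h2 : Tendsto (fun x : ℝ => exp (-x)) atTop (nhds 0) := tendsto_exp_neg_atTop_nhds_zero
    simpa using (h1.div (h2.const_sub 1) (by norm_num)).const_sub 1
  refine (hlim.comp hx).congr' ?_
  filter_upwards [eventually_gt_atTop 1] with w hw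
  have hI : ∫ t in u..ubar, exp (-t * log w) * f t =
      ∫ t in u..ubar, exp (-t * log w) * (ubar - u)⁻¹ :=
    intervalIntegral.integral_congr fun t ht => by simp only [hf t ht]
  have hJ : ∀ I : ℝ, ∫ z in u..ubar, z * (exp (-z * log w) * f z / I) =
      ∫ z in u..ubar, z * (exp (-z * log w) * (ubar - u)⁻¹ / I) := fun I =>
    intervalIntegral.integral_congr fun t ht => by simp only [hf t ht]
  rw [hI, hJ, tilted_mean_eq u ubar (log w) _ huu (log_pos hw) (inv_ne_zero hD.ne')]
  rfl
end

section
/- The sum of the covariates degenerates in the tail: lim_{w→∞} E_w[s] = a₁ + ⋯ + a_p and lim_{w→∞} (E_w[s²] − (E_w[s])²) = 0. In particular, the vector (1, X₁, …, X_p) becomes asymptotically collinear under the conditional law given Y > w. -/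
open MeasureTheory Real Filter

/-!
The tilted expectation is a Laplace-type average: with `t = log w → ∞`, the weight
`exp (-t * exp s)` decreases in `s`, and for `m < m + δ/2 < m + δ` the weight at level `m + δ` is
exponentially small (in `t`) relative to the weight at level `m + δ/2`. Since the law of `s` has
positive mass arbitrarily close to its lower endpoint `m = ∑ a_j`, the tilted law of `s`
concentrates at `m`. Hence `E_w[g(s)] → g(m)` for every `g` that is continuous at `m` and bounded on
the range of `s` (`tendsto_tilted_average`). Taking `g(u) = u` and `g(u) = u²` yields the mean and,
by subtraction, the variance. Positive mass near `m` holds because the density is positive on the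
nonempty open set `{s < m + δ} ∩ ∏ (a_j, b_j)`.
-/

/-- Laplace concentration: under the weights `exp (-exp (s x) * t) * D x` the average of `g ∘ s`
tends to `g m` as `t → ∞`, where `m` is a lower bound of `s` on the support of `D` that is
approached with positive `D`-mass. -/
lemma tendsto_tilted_average {Ω : Type*} [MeasurableSpace Ω] {μ : Measure Ω}
    {D s : Ω → ℝ} {g : ℝ → ℝ} {m K : ℝ}
    (hDi : Integrable D μ) (hD0 : ∀ x, 0 ≤ D x) (hs : Measurable s) (hg : Measurable g)
    (hgc : ContinuousAt g m)
    (hm : ∀ x, D x ≠ 0 → m ≤ s x) (hK : ∀ x, D x ≠ 0 → |g (s x)| ≤ K)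
    (hpos : ∀ δ > 0, 0 < ∫ x in {x | s x < m + δ}, D x ∂μ) :
    Tendsto (fun t : ℝ => (∫ x, g (s x) * (exp (-(exp (s x)) * t) * D x) ∂μ) /
      ∫ x, exp (-(exp (s x)) * t) * D x ∂μ) atTop (nhds (g m)) := by
  have hW : ∀ t : ℝ, 0 ≤ t → Integrable (fun x => exp (-(exp (s x)) * t) * D x) μ := by
    intro t ht
    refine hDi.bdd_mul (c := 1) (by fun_prop) (ae_of_all _ fun x => ?_)
    rw [norm_of_nonneg (exp_pos _).le, exp_le_one_iff]
    nlinarith [mul_nonneg (exp_pos (s x)).le ht]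
  have hgW : ∀ t : ℝ, 0 ≤ t →
      Integrable (fun x => g (s x) * (exp (-(exp (s x)) * t) * D x)) μ := by
    intro t ht
    refine ((hW t ht).const_mul K).mono
      ((hg.comp hs).aestronglyMeasurable.mul (hW t ht).aestronglyMeasurable)
      (ae_of_all _ fun x => ?_)
    by_cases hx : D x = 0
    · simp [hx]
    · rw [norm_mul (g (s x)), norm_mul K]
      exact mul_le_mul_of_nonneg_right ((hK x hx).trans (le_abs_self K)) (norm_nonneg _)
  rw [Metric.tendsto_atTop']
  intro ε hε
  obtain ⟨δ, hδ, hgδ⟩ := Metric.continuousAt_iff.1 hgc (ε / 2) (by positivity)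
  set A : ℝ := ∫ x, D x ∂μ with hA
  set B : ℝ := ∫ x in {x | s x < m + δ / 2}, D x ∂μ with hB
  have hBpos : 0 < B := hpos _ (by positivity)
  set L : ℝ := |K| + |g m| with hL
  have hL0 : 0 ≤ L := by positivity
  have hA0 : 0 ≤ A := integral_nonneg hD0
  have hgap : 0 < exp (m + δ) - exp (m + δ / 2) := by
    rw [sub_pos, exp_lt_exp]; linarith
  have hlim : Tendsto (fun t : ℝ => L * A * exp (-((exp (m + δ) - exp (m + δ / 2)) * t)))
      atTop (nhds 0) := by
    have := (tendsto_exp_neg_atTop_nhds_zero.comp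
      (tendsto_id.const_mul_atTop hgap)).const_mul (L * A)
    simpa using this
  obtain ⟨T, hT⟩ := eventually_atTop.1
    (hlim.eventually (gt_mem_nhds (show 0 < ε / 2 * B by positivity)))
  refine ⟨max T 0, fun t ht => ?_⟩
  have ht0 : 0 ≤ t := (le_max_right T 0).trans ht.le
  have hTt := hT t ((le_max_left T 0).trans ht.le)
  set Z : ℝ := ∫ x, exp (-(exp (s x)) * t) * D x ∂μ with hZ
  have hZB : exp (-(exp (m + δ / 2)) * t) * B ≤ Z := by
    rw [hB, ← integral_const_mul]
    refine le_trans (setIntegral_mono_on (hDi.integrableOn.const_mul _) (hW t ht0).integrableOn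
      (measurableSet_lt hs measurable_const) fun x hx => ?_)
      (setIntegral_le_integral (hW t ht0) (ae_of_all _ fun x => ?_))
    · have hx' : s x ≤ m + δ / 2 := le_of_lt hx
      have := hD0 x
      gcongr
    · exact mul_nonneg (exp_pos _).le (hD0 x)
  have hZpos : 0 < Z := lt_of_lt_of_le (by positivity) hZB
  -- Near `m` continuity of `g` bounds the error; away from `m` the weight is at most its value
  -- at level `m + δ`.
  have hnum : |(∫ x, g (s x) * (exp (-(exp (s x)) * t) * D x) ∂μ) - g m * Z| ≤
      ε / 2 * Z + L * exp (-(exp (m + δ)) * t) * A := by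
    rw [hZ, ← integral_const_mul, ← integral_sub (hgW t ht0) ((hW t ht0).const_mul _),
      ← integral_const_mul, hA, ← integral_const_mul,
      ← integral_add ((hW t ht0).const_mul _) (hDi.const_mul _), ← norm_eq_abs]
    refine norm_integral_le_of_norm_le (((hW t ht0).const_mul _).add (hDi.const_mul _))
      (ae_of_all _ fun x => ?_)
    have hDx := hD0 x
    have he := exp_pos (-(exp (s x)) * t)
    rw [← sub_mul, norm_mul, norm_of_nonneg (mul_nonneg he.le hDx), norm_eq_abs]
    by_cases hx : D x = 0
    · simp [hx]
    rcases lt_or_ge (s x) (m + δ) with h | h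
    · have h1 : |g (s x) - g m| ≤ ε / 2 := by
        refine (hgδ ?_).le
        rw [dist_eq, abs_of_nonneg (sub_nonneg.2 (hm x hx))]
        linarith
      have h2 : 0 ≤ L * exp (-(exp (m + δ)) * t) * D x := by positivity
      have := mul_le_mul_of_nonneg_right h1 (mul_nonneg he.le hDx)
      linarith
    · have h1 : |g (s x) - g m| ≤ L :=
        (abs_sub _ _).trans (add_le_add ((hK x hx).trans (le_abs_self K)) le_rfl)
      have h2 : exp (-(exp (s x)) * t) ≤ exp (-(exp (m + δ)) * t) := by gcongr
      have h3 : |g (s x) - g m| * (exp (-(exp (s x)) * t) * D x) ≤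
          L * (exp (-(exp (m + δ)) * t) * D x) := by gcongr
      have h4 : 0 ≤ ε / 2 * (exp (-(exp (s x)) * t) * D x) := by positivity
      linarith
  have hfar : L * exp (-(exp (m + δ)) * t) * A < ε / 2 * Z := by
    calc L * exp (-(exp (m + δ)) * t) * A
        = exp (-(exp (m + δ / 2)) * t) *
            (L * A * exp (-((exp (m + δ) - exp (m + δ / 2)) * t))) := by
          have : exp (-(exp (m + δ)) * t) = exp (-(exp (m + δ / 2)) * t) *
              exp (-((exp (m + δ) - exp (m + δ / 2)) * t)) := by
            rw [← exp_add]; congr 1; ring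
          rw [this]; ring
      _ < exp (-(exp (m + δ / 2)) * t) * (ε / 2 * B) := by gcongr
      _ = ε / 2 * (exp (-(exp (m + δ / 2)) * t) * B) := by ring
      _ ≤ ε / 2 * Z := by gcongr
  rw [dist_eq, div_sub' hZpos.ne', abs_div, abs_of_pos hZpos, div_lt_iff₀ hZpos, mul_comm Z]
  linarith

/-- Corollary 2 of the paper: with independent covariates `X₁, …, X_p` having
bounded densities bounded away from zero, and tail index
`α(X) = exp(X₁ + ⋯ + X_p)`, the conditional mean of `s = X₁ + ⋯ + X_p`
given `Y > w` converges to the sum of the lower endpoints `a₁ + ⋯ + a_p`,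
and the conditional variance of `s` converges to `0`; in particular
`(1, X₁, …, X_p)` becomes asymptotically collinear. -/
theorem tail_index_sum_of_covariates_degenerates
    (p : ℕ) (hp : 1 ≤ p)
    (a b c C : Fin p → ℝ)
    (hab : ∀ j, a j < b j) (hc : ∀ j, 0 < c j) (hcC : ∀ j, c j ≤ C j)
    (f : Fin p → ℝ → ℝ) (hf_meas : ∀ j, Measurable (f j))
    (hf_supp : ∀ j x, x ∉ Set.Icc (a j) (b j) → f j x = 0)
    (hf_int : ∀ j, (∫ x in (a j)..(b j), f j x) = 1)
    (hf_lb : ∀ j, ∀ x ∈ Set.Icc (a j) (b j), c j ≤ f j x)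
    (hf_ub : ∀ j, ∀ x ∈ Set.Icc (a j) (b j), f j x ≤ C j) :
    let s : (Fin p → ℝ) → ℝ := fun x => ∑ j, x j
    let dens : (Fin p → ℝ) → ℝ := fun x => ∏ j, f j (x j)
    let Ew : ℝ → ((Fin p → ℝ) → ℝ) → ℝ := fun w h =>
      (∫ x, h x * (Real.exp (-(Real.exp (s x)) * Real.log w) * dens x)) /
      (∫ x, Real.exp (-(Real.exp (s x)) * Real.log w) * dens x)
    Filter.Tendsto (fun w : ℝ => Ew w s) Filter.atTop (nhds (∑ j, a j)) ∧
    Filter.Tendsto (fun w : ℝ => Ew w (fun x => (s x) ^ 2) - (Ew w s) ^ 2)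
      Filter.atTop (nhds 0) := by
  intro s dens Ew
  have hf0 : ∀ j x, 0 ≤ f j x := fun j x => by
    by_cases hx : x ∈ Set.Icc (a j) (b j)
    · exact (hc j).le.trans (hf_lb j x hx)
    · exact (hf_supp j x hx).ge
  have hfi : ∀ j, Integrable (f j) := by
    intro j
    -- A non-integrable function would have integral `0`, not `1`.
    have h : IntervalIntegrable (f j) volume (a j) (b j) := by
      by_contra h
      have := intervalIntegral.integral_undef h
      rw [hf_int j] at this
      exact one_ne_zero this
    rw [intervalIntegrable_iff_integrableOn_Icc_of_le (hab j).le] at h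
    refine (integrableOn_iff_integrable_of_support_subset fun x hx => ?_).1 h
    by_contra hx'
    exact hx (hf_supp j x hx')
  have hDi : Integrable dens := Integrable.fintype_prod hfi
  have hD0 : ∀ x, 0 ≤ dens x := fun x => Finset.prod_nonneg fun j _ => hf0 j _
  have hs : Continuous s := by fun_prop
  have hsupp : ∀ x, dens x ≠ 0 → ∀ j, x j ∈ Set.Icc (a j) (b j) := by
    intro x hx j
    by_contra h
    exact hx (Finset.prod_eq_zero (Finset.mem_univ j) (hf_supp j _ h))
  have hm : ∀ x, dens x ≠ 0 → ∑ j, a j ≤ s x := fun x hx =>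
    Finset.sum_le_sum fun j _ => (hsupp x hx j).1
  have hM : ∀ x, dens x ≠ 0 → |s x| ≤ ∑ j, (|a j| + |b j|) := fun x hx =>
    (Finset.abs_sum_le_sum_abs _ _).trans <| Finset.sum_le_sum fun j _ =>
      (abs_le_max_abs_abs (hsupp x hx j).1 (hsupp x hx j).2).trans
        (max_le_add_of_nonneg (abs_nonneg _) (abs_nonneg _))
  have hpos : ∀ δ > 0, 0 < ∫ x in {x | s x < ∑ j, a j + δ}, dens x := by
    intro δ hδ
    rw [setIntegral_pos_iff_support_of_nonneg_ae (ae_of_all _ hD0) hDi.integrableOn]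
    have hopen : IsOpen ({x | s x < ∑ j, a j + δ} ∩
        Set.univ.pi fun j => Set.Ioo (a j) (b j)) :=
      (isOpen_lt hs continuous_const).inter (isOpen_set_pi Set.finite_univ fun _ _ => isOpen_Ioo)
    refine (hopen.measure_pos volume ?_).trans_le (measure_mono ?_)
    -- Points `a + r (b - a)` with small `r > 0` lie in the open set.
    · have hcont : Continuous fun r : ℝ => s fun j => a j + r * (b j - a j) := by fun_prop
      have hev : ∀ᶠ r in nhds (0 : ℝ), s (fun j => a j + r * (b j - a j)) < ∑ j, a j + δ := by
        refine hcont.continuousAt.eventually (gt_mem_nhds ?_)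
        simp [s, hδ]
      obtain ⟨r, hr, hr0, hr1⟩ := ((hev.filter_mono nhdsWithin_le_nhds).and
        (Ioo_mem_nhdsGT (zero_lt_one' ℝ))).exists
      refine ⟨fun j => a j + r * (b j - a j), hr, fun j _ => ?_⟩
      have := hab j
      constructor <;> dsimp only <;> nlinarith
    · rintro x ⟨hx1, hx2⟩
      refine ⟨(Finset.prod_pos fun j _ => ?_).ne', hx1⟩
      exact (hc j).trans_le (hf_lb j _ (Set.Ioo_subset_Icc_self (hx2 j trivial)))
  have h1 : Tendsto (fun w : ℝ => Ew w s) atTop (nhds (∑ j, a j)) :=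
    (tendsto_tilted_average (g := fun u => u) hDi hD0 hs.measurable measurable_id
      continuousAt_id hm hM hpos).comp tendsto_log_atTop
  have h2 : Tendsto (fun w : ℝ => Ew w fun x => s x ^ 2) atTop (nhds ((∑ j, a j) ^ 2)) :=
    (tendsto_tilted_average (g := fun u => u ^ 2) (K := (∑ j, (|a j| + |b j|)) ^ 2)
      hDi hD0 hs.measurable (by fun_prop) (by fun_prop) hm
      (fun x hx => by rw [abs_pow]; gcongr; exact hM x hx) hpos).comp tendsto_log_atTop
  exact ⟨h1, by simpa using h2.sub (h1.pow 2)⟩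
end

section
/- For every fixed z ∈ (u, ū], the tilted density vanishes in the limit: lim_{w→∞} g_w(z) = 0. Thus the conditional density of the (transformed) covariate given Y > w converges to zero everywhere except at the point where the tail index attains its minimum. -/
/-! With `L = log w` and `m = (u + z) / 2`, the part `[u, m]` of the normalising integral alone
contributes at least `(m - u) * (c * exp (-m * L))`, while the numerator is at most
`C * exp (-z * L)`. The quotient is therefore at most a constant times `exp (-(z - m) * L)`, which
tends to zero because `m < z`. -/

open MeasureTheory Real Filter

/-- A lower bound for the Laplace transform of `f` over `[u, b]` by its mass on `[u, m]`. -/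
lemma exp_integral_lower_bound {u m b c L : ℝ} {f : ℝ → ℝ} (hum : u ≤ m) (hmb : m ≤ b)
    (h0c : 0 ≤ c) (hL : 0 ≤ L) (hf : IntervalIntegrable f volume u b)
    (hf_lb : ∀ t ∈ Set.Icc u b, c ≤ f t) :
    (m - u) * (c * Real.exp (-m * L)) ≤ ∫ t in u..b, Real.exp (-t * L) * f t := by
  have hint : IntervalIntegrable (fun t => Real.exp (-t * L) * f t) volume u b :=
    hf.continuousOn_mul (by fun_prop)
  have hsub : IntervalIntegrable (fun t => Real.exp (-t * L) * f t) volume u m :=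
    hint.mono_set (by
      rw [Set.uIcc_of_le hum, Set.uIcc_of_le (hum.trans hmb)]
      exact Set.Icc_subset_Icc_right hmb)
  calc (m - u) * (c * Real.exp (-m * L)) = ∫ _ in u..m, c * Real.exp (-m * L) :=
      (intervalIntegral.integral_const (c * Real.exp (-m * L))).symm
    _ ≤ ∫ t in u..m, Real.exp (-t * L) * f t := by
      refine intervalIntegral.integral_mono_on hum (by simp) hsub fun t ht => ?_
      rw [mul_comm c]
      refine mul_le_mul (Real.exp_le_exp.mpr ?_) (hf_lb t ⟨ht.1, ht.2.trans hmb⟩) h0c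
        (Real.exp_pos _).le
      nlinarith [ht.2]
    _ ≤ ∫ t in u..b, Real.exp (-t * L) * f t := by
      refine intervalIntegral.integral_mono_interval le_rfl hum hmb ?_ hint
      filter_upwards [ae_restrict_mem measurableSet_Ioc] with t ht
      exact mul_nonneg (Real.exp_pos _).le (h0c.trans (hf_lb t ⟨ht.1.le, ht.2⟩))

/-- Degeneracy claim (fz|y) of the paper (Section 2, semiparametric
discussion): for every fixed `z ∈ (u, ū]`, the tilted (conditional) density
of `Z = α(X)` given `Y > w` converges to zero as `w → ∞`; i.e. the
conditional density vanishes everywhere except where the tail index attains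
its minimum. -/
theorem tail_index_conditional_density_vanishes
    (u ubar c C : ℝ) (h0u : 0 < u) (huu : u < ubar) (h0c : 0 < c) (hcC : c ≤ C)
    (f : ℝ → ℝ) (hf_meas : Measurable f)
    (hf_supp : ∀ z, z ∉ Set.Icc u ubar → f z = 0)
    (hf_int : (∫ z in u..ubar, f z) = 1)
    (hf_lb : ∀ z ∈ Set.Icc u ubar, c ≤ f z)
    (hf_ub : ∀ z ∈ Set.Icc u ubar, f z ≤ C)
    (z : ℝ) (hz : z ∈ Set.Ioc u ubar) :
    Filter.Tendsto
      (fun w : ℝ =>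
        Real.exp (-z * Real.log w) * f z /
          (∫ t in u..ubar, Real.exp (-t * Real.log w) * f t))
      Filter.atTop (nhds 0) := by
  obtain ⟨hz1, hz2⟩ := hz
  set m := (u + z) / 2 with hm
  have hum : 0 < m - u := by linarith
  have hmz : 0 < z - m := by linarith
  have hfz : c ≤ f z := hf_lb z ⟨hz1.le, hz2⟩
  -- A non-integrable `f` would have integral `0` by convention, contradicting total mass one.
  have hf : IntervalIntegrable f volume u ubar :=
    intervalIntegral.intervalIntegrable_of_integral_ne_zero (by rw [hf_int]; exact one_ne_zero)
  have hden : ∀ w : ℝ, 1 ≤ w → (m - u) * (c * Real.exp (-m * Real.log w)) ≤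
      ∫ t in u..ubar, Real.exp (-t * Real.log w) * f t := fun w hw =>
    exp_integral_lower_bound (by linarith) (by linarith) h0c.le (Real.log_nonneg hw) hf hf_lb
  have hlim : Tendsto (fun w : ℝ => C / ((m - u) * c) * Real.exp (-((z - m) * Real.log w)))
      atTop (nhds 0) := by
    simpa using (Real.tendsto_exp_neg_atTop_nhds_zero.comp
      (Real.tendsto_log_atTop.const_mul_atTop hmz)).const_mul (C / ((m - u) * c))
  refine squeeze_zero' ?_ ?_ hlim
  · filter_upwards [eventually_ge_atTop 1] with w hw
    have hpos : 0 ≤ (m - u) * (c * Real.exp (-m * Real.log w)) := by positivity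
    exact div_nonneg (mul_nonneg (Real.exp_pos _).le (h0c.le.trans hfz)) (hpos.trans (hden w hw))
  · filter_upwards [eventually_ge_atTop 1] with w hw
    calc _ ≤ Real.exp (-z * Real.log w) * C / ((m - u) * (c * Real.exp (-m * Real.log w))) := by
          refine div_le_div₀ (mul_nonneg (Real.exp_pos _).le (h0c.le.trans hcC)) ?_
            (by positivity) (hden w hw)
          exact mul_le_mul_of_nonneg_left (hf_ub z ⟨hz1.le, hz2⟩) (Real.exp_pos _).le
      _ = C / ((m - u) * c) * Real.exp (-((z - m) * Real.log w)) := by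
          have hexp : Real.exp (-z * Real.log w) =
              Real.exp (-((z - m) * Real.log w)) * Real.exp (-m * Real.log w) := by
            rw [← Real.exp_add]; congr 1; ring
          rw [hexp]
          field_simp
end

section
/- The tilted density of the covariates in the location–scale (extremal quantile) model converges pointwise: for every (x₁, x₂) ∈ R, lim_{w→∞} h_w(x₁, x₂) = x₂^α f(x₁, x₂) / ∬_R t₂^α f(t₁, t₂) dt₁ dt₂. In particular the conditional density of (X₁, X₂) given Y > w does not degenerate as w → ∞. -/
/-!
Multiplying numerator and denominator of the tilted density by `w ^ α` replaces the weight
`((w - t₁) / t₂) ^ (-α)` by `((w - t₁) / w) ^ (-α) * t₂ ^ α`, which tends to `t₂ ^ α` pointwise.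
On the rectangle the first factor is at most `(1/2) ^ (-α)` once `w ≥ 2 ū₁`, so the normalising
integral converges by dominated convergence. Its limit is at least `u₂ ^ α * ∫ f = u₂ ^ α > 0`, so
the quotient converges to the quotient of the limits.
-/

open MeasureTheory Real Filter

lemma rescaled_weight {α w a b : ℝ} (hw : 0 < w) (ha : a < w) (hb : 0 < b) :
    w ^ α * ((w - a) / b) ^ (-α) = ((w - a) / w) ^ (-α) * b ^ α := by
  have hwa : 0 < w - a := by linarith
  rw [div_rpow hwa.le hb.le, div_rpow hwa.le hw.le, rpow_neg hb.le, rpow_neg hw.le]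
  simp only [div_inv_eq_mul]
  ring

lemma tendsto_rescaled_factor (α a : ℝ) :
    Tendsto (fun w : ℝ => ((w - a) / w) ^ (-α)) atTop (nhds 1) := by
  have h : Tendsto (fun w : ℝ => (w - a) / w) atTop (nhds 1) := by
    have h' : Tendsto (fun w : ℝ => 1 - a / w) atTop (nhds (1 - 0)) :=
      tendsto_const_nhds.sub (tendsto_const_nhds.div_atTop tendsto_id)
    rw [sub_zero] at h'
    refine h'.congr' ?_
    filter_upwards [eventually_gt_atTop 0] with w hw
    field_simp
  simpa using h.rpow_const (p := -α) (Or.inl one_ne_zero)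

/-- Theorem 3 (density_quantile) of the paper, general bounded-density form:
in the location–scale (extremal quantile) model `Y = X₁ + X₂·Ũ` with
`P(Ũ > t | X) = t^{-α}`, the conditional density of `(X₁, X₂)` given `Y > w`
converges pointwise to `x₂^α f(x₁,x₂) / ∬_R t₂^α f(t₁,t₂) dt₁ dt₂`; in
particular it does not degenerate as `w → ∞`. -/
theorem extremal_quantile_conditional_density_limit
    (α u1 ub1 u2 ub2 c C : ℝ) (hα : 1 < α)
    (h1 : u1 < ub1) (h02 : 0 < u2) (h2 : u2 < ub2)
    (h0c : 0 < c) (hcC : c ≤ C)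
    (f : ℝ × ℝ → ℝ) (hf_meas : Measurable f)
    (hf_supp : ∀ x : ℝ × ℝ, x ∉ Set.Icc u1 ub1 ×ˢ Set.Icc u2 ub2 → f x = 0)
    (hf_int : (∫ x in Set.Icc u1 ub1 ×ˢ Set.Icc u2 ub2, f x) = 1)
    (hf_lb : ∀ x ∈ Set.Icc u1 ub1 ×ˢ Set.Icc u2 ub2, c ≤ f x)
    (hf_ub : ∀ x ∈ Set.Icc u1 ub1 ×ˢ Set.Icc u2 ub2, f x ≤ C)
    (x : ℝ × ℝ) (hx : x ∈ Set.Icc u1 ub1 ×ˢ Set.Icc u2 ub2) :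
    Filter.Tendsto
      (fun w : ℝ =>
        ((w - x.1) / x.2) ^ (-α) * f x /
          (∫ t in Set.Icc u1 ub1 ×ˢ Set.Icc u2 ub2,
            ((w - t.1) / t.2) ^ (-α) * f t))
      Filter.atTop
      (nhds (x.2 ^ α * f x /
        (∫ t in Set.Icc u1 ub1 ×ˢ Set.Icc u2 ub2, t.2 ^ α * f t))) := by
  have hα0 : 0 < α := by linarith
  set R : Set (ℝ × ℝ) := Set.Icc u1 ub1 ×ˢ Set.Icc u2 ub2 with hR
  have hRm : MeasurableSet R := measurableSet_Icc.prod measurableSet_Icc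
  have hRfin : volume R ≠ ⊤ := (isCompact_Icc.prod isCompact_Icc).measure_lt_top.ne
  have hpos : ∀ t ∈ R, 0 < t.2 := fun t ht => h02.trans_le ht.2.1
  have hfi : IntegrableOn f R := by
    by_contra h
    rw [integral_undef h] at hf_int
    exact zero_ne_one hf_int
  -- For `w` positive, at least `2 * ub1` and beyond `ub1`, the factor `(w - t₁) / w` is at
  -- least `1 / 2` on `R`.
  have hev : ∀ᶠ w : ℝ in atTop, 0 < w ∧ ub1 < w ∧ 2 * ub1 ≤ w :=
    (eventually_gt_atTop 0).and ((eventually_gt_atTop ub1).and (eventually_ge_atTop (2 * ub1)))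
  have hden : Tendsto (fun w : ℝ => ∫ t in R, ((w - t.1) / w) ^ (-α) * t.2 ^ α * f t) atTop
      (nhds (∫ t in R, t.2 ^ α * f t)) := by
    refine tendsto_integral_filter_of_dominated_convergence
      (fun _ => (1 / 2 : ℝ) ^ (-α) * ub2 ^ α * C) ?_ ?_ ?_ ?_
    · exact Eventually.of_forall fun w => by
        have : Measurable fun t : ℝ × ℝ => ((w - t.1) / w) ^ (-α) * t.2 ^ α * f t := by fun_prop
        exact this.aestronglyMeasurable
    · filter_upwards [hev] with w hw
      obtain ⟨hw0, hw1, hw2⟩ := hw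
      refine (ae_restrict_iff' hRm).2 (Eventually.of_forall fun t ht => ?_)
      have hf0 : 0 ≤ f t := h0c.le.trans (hf_lb t ht)
      have ht1 : t.1 ≤ ub1 := ht.1.2
      have hhalf : 1 / 2 ≤ (w - t.1) / w := by
        rw [le_div_iff₀ hw0]; linarith
      have hA : ((w - t.1) / w) ^ (-α) ≤ (1 / 2 : ℝ) ^ (-α) :=
        rpow_le_rpow_of_nonpos (by norm_num) hhalf (by linarith)
      have hA0 : 0 ≤ ((w - t.1) / w) ^ (-α) := rpow_nonneg (by linarith) _
      have hB : t.2 ^ α ≤ ub2 ^ α := rpow_le_rpow (hpos t ht).le ht.2.2 hα0.le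
      have hB0 : 0 ≤ t.2 ^ α := rpow_nonneg (hpos t ht).le _
      rw [norm_of_nonneg (mul_nonneg (mul_nonneg hA0 hB0) hf0)]
      exact mul_le_mul (mul_le_mul hA hB hB0 (hA0.trans hA)) (hf_ub t ht) hf0
        (mul_nonneg (hA0.trans hA) (hB0.trans hB))
    · exact integrableOn_const hRfin
    · refine Eventually.of_forall fun t => ?_
      simpa using ((tendsto_rescaled_factor α t.1).mul_const (t.2 ^ α)).mul_const (f t)
  have hne : (∫ t in R, t.2 ^ α * f t) ≠ 0 := by
    have hint : IntegrableOn (fun t : ℝ × ℝ => t.2 ^ α * f t) R := by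
      refine Integrable.bdd_mul (c := ub2 ^ α) hfi ?_ ?_
      · have : Measurable fun t : ℝ × ℝ => t.2 ^ α := by fun_prop
        exact this.aestronglyMeasurable
      · refine (ae_restrict_iff' hRm).2 (Eventually.of_forall fun t ht => ?_)
        rw [norm_of_nonneg (rpow_nonneg (hpos t ht).le _)]
        exact rpow_le_rpow (hpos t ht).le ht.2.2 hα0.le
    have hle : ∫ t in R, u2 ^ α * f t ≤ ∫ t in R, t.2 ^ α * f t :=
      setIntegral_mono_on (hfi.const_mul _) hint hRm fun t ht =>
        mul_le_mul_of_nonneg_right (rpow_le_rpow h02.le ht.2.1 hα0.le)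
          (h0c.le.trans (hf_lb t ht))
    rw [integral_const_mul, hf_int, mul_one] at hle
    exact ((rpow_pos_of_pos h02 α).trans_le hle).ne'
  have hnum : Tendsto (fun w : ℝ => ((w - x.1) / w) ^ (-α) * x.2 ^ α * f x) atTop
      (nhds (x.2 ^ α * f x)) := by
    simpa using ((tendsto_rescaled_factor α x.1).mul_const (x.2 ^ α)).mul_const (f x)
  refine (hnum.div hden hne).congr' ?_
  filter_upwards [hev] with w hw
  obtain ⟨hw0, hw1, -⟩ := hw
  have hI : ∫ t in R, ((w - t.1) / w) ^ (-α) * t.2 ^ α * f t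
      = w ^ α * ∫ t in R, ((w - t.1) / t.2) ^ (-α) * f t := by
    rw [← integral_const_mul]
    refine setIntegral_congr_fun hRm fun t ht => ?_
    have ht1 : t.1 ≤ ub1 := ht.1.2
    rw [← rescaled_weight hw0 (ht1.trans_lt hw1) (hpos t ht), mul_assoc]
  have hx1 : x.1 ≤ ub1 := hx.1.2
  simp only [Pi.div_apply]
  rw [hI, ← rescaled_weight hw0 (hx1.trans_lt hw1) (hpos x hx), mul_assoc,
    mul_div_mul_left _ _ (rpow_pos_of_pos hw0 α).ne']
end

section
/- In the uniform case, for every (x₁, x₂) ∈ R, lim_{w→∞} h_w(x₁, x₂) = (α + 1)·x₂^α / ((ū₁ − u₁)·(ū₂^{α+1} − u₂^{α+1})). -/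
/-!
Multiplying numerator and denominator by `w ^ α` does not change the quotient, and it turns the
kernel `((w - t₁) / t₂) ^ (-α)` into `((w - t₁) / t₂) ^ (-α) * w ^ α`, which converges to `t₂ ^ α`
as `w → ∞` (`tendsto_rescaled_tail`). On the rectangle the rescaled kernel is at most
`(2 * ū₂) ^ α` once `w` is large (`rescaled_tail_le`), so dominated convergence passes the limit
through the integral in the denominator (`tendsto_integral_rescaled_tail`). The limiting integral
factors over the two coordinates (`integral_rect_rpow`), and the constant value of the uniform
density cancels.
-/

open MeasureTheory Real Filter

lemma rescaled_tail_eq {α w t s : ℝ} (hw : 0 < w) (hs : 0 < s) (ht : t < w) :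
    ((w - t) / s) ^ (-α) * w ^ α = (s * (w / (w - t))) ^ α := by
  have h : 0 < w - t := sub_pos.2 ht
  rw [rpow_neg (by positivity), ← inv_rpow (by positivity), ← mul_rpow (by positivity) hw.le]
  congr 1
  field_simp

lemma tendsto_rescaled_tail {α s : ℝ} (t : ℝ) (hα : 0 < α) (hs : 0 < s) :
    Tendsto (fun w : ℝ => ((w - t) / s) ^ (-α) * w ^ α) atTop (nhds (s ^ α)) := by
  have h1 : Tendsto (fun w : ℝ => w / (w - t)) atTop (nhds 1) := by
    have h2 : Tendsto (fun w : ℝ => 1 + t / (w - t)) atTop (nhds (1 + 0)) :=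
      tendsto_const_nhds.add
        (tendsto_const_nhds.div_atTop (tendsto_atTop_add_const_right _ (-t) tendsto_id))
    rw [add_zero] at h2
    refine h2.congr' ?_
    filter_upwards [eventually_gt_atTop t] with w hw
    have : w - t ≠ 0 := (sub_pos.2 hw).ne'
    field_simp
    ring
  have h3 : Tendsto (fun w : ℝ => (s * (w / (w - t))) ^ α) atTop (nhds ((s * 1) ^ α)) :=
    (tendsto_const_nhds.mul h1).rpow_const (Or.inr hα.le)
  rw [mul_one] at h3
  refine h3.congr' ?_
  filter_upwards [eventually_gt_atTop t, eventually_gt_atTop 0] with w hw hw0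
  exact (rescaled_tail_eq hw0 hs hw).symm

lemma rescaled_tail_le {α w t s b d : ℝ} (hα : 0 < α) (hw : 0 < w) (hb : 2 * b < w)
    (ht : t ≤ b) (hs : 0 < s) (hsd : s ≤ d) :
    ((w - t) / s) ^ (-α) * w ^ α ≤ (2 * d) ^ α := by
  have htw : t < w := by linarith
  have h : 0 < w - t := sub_pos.2 htw
  rw [rescaled_tail_eq hw hs htw]
  refine rpow_le_rpow (by positivity) ?_ hα.le
  have h2 : w / (w - t) ≤ 2 := by
    rw [div_le_iff₀ h]
    linarith
  calc s * (w / (w - t)) ≤ d * 2 := mul_le_mul hsd h2 (by positivity) (hs.le.trans hsd)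
    _ = 2 * d := mul_comm _ _

lemma tendsto_integral_rescaled_tail {α a b c d : ℝ} (hα : 0 < α) (hc : 0 < c) :
    Tendsto (fun w : ℝ => ∫ t in Set.Icc a b ×ˢ Set.Icc c d,
        ((w - t.1) / t.2) ^ (-α) * w ^ α) atTop
      (nhds (∫ t in Set.Icc a b ×ˢ Set.Icc c d, t.2 ^ α)) := by
  have hm : MeasurableSet (Set.Icc a b ×ˢ Set.Icc c d) := measurableSet_Icc.prod measurableSet_Icc
  refine tendsto_integral_filter_of_dominated_convergence (fun _ => (2 * d) ^ α) ?_ ?_ ?_ ?_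
  · exact Eventually.of_forall fun w => Measurable.aestronglyMeasurable (by fun_prop)
  · filter_upwards [eventually_gt_atTop 0, eventually_gt_atTop (2 * b)] with w hw hwb
    refine (ae_restrict_iff' hm).2 (Eventually.of_forall fun t ht => ?_)
    obtain ⟨⟨-, h1⟩, h2, h3⟩ := ht
    have hs : 0 < t.2 := hc.trans_le h2
    have htw : 0 < w - t.1 := by linarith
    rw [Real.norm_of_nonneg (by positivity)]
    exact rescaled_tail_le hα hw hwb h1 hs h3
  · exact integrableOn_const (isCompact_Icc.prod isCompact_Icc).measure_lt_top.ne
  · refine (ae_restrict_iff' hm).2 (Eventually.of_forall fun t ht => ?_)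
    exact tendsto_rescaled_tail t.1 hα (hc.trans_le ht.2.1)

lemma integral_rect_rpow {α a b c d : ℝ} (hα : 0 < α) (hab : a ≤ b) (hcd : c ≤ d) :
    ∫ t in Set.Icc a b ×ˢ Set.Icc c d, t.2 ^ α =
      (b - a) * ((d ^ (α + 1) - c ^ (α + 1)) / (α + 1)) := by
  have h := setIntegral_prod_mul (μ := volume) (ν := volume) (fun _ : ℝ => (1 : ℝ))
    (fun s : ℝ => s ^ α) (Set.Icc a b) (Set.Icc c d)
  simp only [one_mul] at h
  rw [Measure.volume_eq_prod, h, integral_Icc_eq_integral_Ioc (x := c),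
    ← intervalIntegral.integral_of_le hcd, integral_rpow (Or.inl (by linarith))]
  simp [hab]

/-- Theorem 3 (density_quantile) of the paper, limiting density formula: in
the uniform case, the conditional density of `(X₁, X₂)` given `Y > w`
converges pointwise to `(α+1)·x₂^α / ((ū₁−u₁)·(ū₂^{α+1} − u₂^{α+1}))`. -/
theorem extremal_quantile_uniform_conditional_density_limit
    (α u1 ub1 u2 ub2 : ℝ) (hα : 1 < α)
    (h1 : u1 < ub1) (h02 : 0 < u2) (h2 : u2 < ub2)
    (x : ℝ × ℝ) (hx : x ∈ Set.Icc u1 ub1 ×ˢ Set.Icc u2 ub2) :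
    let f : ℝ × ℝ → ℝ := fun t =>
      if u1 ≤ t.1 ∧ t.1 ≤ ub1 ∧ u2 ≤ t.2 ∧ t.2 ≤ ub2
        then ((ub1 - u1) * (ub2 - u2))⁻¹ else 0
    Filter.Tendsto
      (fun w : ℝ =>
        ((w - x.1) / x.2) ^ (-α) * f x /
          (∫ t in Set.Icc u1 ub1 ×ˢ Set.Icc u2 ub2,
            ((w - t.1) / t.2) ^ (-α) * f t))
      Filter.atTop
      (nhds ((α + 1) * x.2 ^ α /
        ((ub1 - u1) * (ub2 ^ (α + 1) - u2 ^ (α + 1))))) := by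
  intro f
  have hα0 : 0 < α := by linarith
  have hd1 : 0 < ub1 - u1 := sub_pos.2 h1
  have hd2 : 0 < ub2 - u2 := sub_pos.2 h2
  have hpow : 0 < ub2 ^ (α + 1) - u2 ^ (α + 1) :=
    sub_pos.2 (rpow_lt_rpow h02.le h2 (by linarith))
  have hf : ∀ t ∈ Set.Icc u1 ub1 ×ˢ Set.Icc u2 ub2, f t = ((ub1 - u1) * (ub2 - u2))⁻¹ :=
    fun t ht => if_pos ⟨ht.1.1, ht.1.2, ht.2.1, ht.2.2⟩
  have hI : ∀ w : ℝ, ∫ t in Set.Icc u1 ub1 ×ˢ Set.Icc u2 ub2, ((w - t.1) / t.2) ^ (-α) * f t =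
      (∫ t in Set.Icc u1 ub1 ×ˢ Set.Icc u2 ub2, ((w - t.1) / t.2) ^ (-α)) *
        ((ub1 - u1) * (ub2 - u2))⁻¹ := fun w => by
    rw [← integral_mul_const]
    refine setIntegral_congr_fun (measurableSet_Icc.prod measurableSet_Icc) fun t ht => ?_
    simp only [hf t ht]
  have hlim := (tendsto_rescaled_tail x.1 hα0 (h02.trans_le hx.2.1)).div
    (tendsto_integral_rescaled_tail (a := u1) (b := ub1) (d := ub2) hα0 h02)
    (by rw [integral_rect_rpow hα0 h1.le h2.le]; positivity)
  rw [integral_rect_rpow hα0 h1.le h2.le] at hlim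
  have hval : x.2 ^ α / ((ub1 - u1) * ((ub2 ^ (α + 1) - u2 ^ (α + 1)) / (α + 1))) =
      (α + 1) * x.2 ^ α / ((ub1 - u1) * (ub2 ^ (α + 1) - u2 ^ (α + 1))) := by
    field_simp
  rw [hval] at hlim
  refine hlim.congr' ?_
  filter_upwards [eventually_gt_atTop 0] with w hw
  rw [hI, hf x hx, Pi.div_apply, integral_mul_const,
    mul_div_mul_right _ _ (rpow_pos_of_pos hw α).ne', mul_div_mul_right _ _ (by positivity)]
end

section
/- Let X be a real random variable with |X| ≤ B almost surely (B > 0), and let M be the 2×2 symmetric matrix M = [[1, E[X]], [E[X], E[X²]]] = E[(1, X)(1, X)ᵀ]. Then for every v ∈ ℝ² with ‖v‖ = 1, vᵀ M v ≥ Var(X)/(1 + B²), and there exists a v ∈ ℝ² with ‖v‖ = 1 such that vᵀ M v ≤ Var(X). Hence the minimum eigenvalue of M is proportional to Var(X): Var(X)/(1 + B²) ≤ λ_min(M) ≤ Var(X). -/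
/-!
Write `m = E[X]`, `s = E[X²]`, so that `tr M = 1 + s`, `det M = s - m² = Var X`, `0 ≤ det M`
and `s ≤ B²`.

By Cayley–Hamilton `(tr M) M - (det M) I = M²`, hence for a unit vector
`(1 + s) vᵀMv = det M + ‖Mv‖² ≥ det M`, which gives the lower bound since `1 + s ≤ 1 + B²`.
The unit vector along `(-m, 1)` has `vᵀMv = Var X / (1 + m²) ≤ Var X`.

The eigenvalues have sum `1 + s` and product `Var X ≥ 0`, so both lie in `[0, 1 + s]`, and each
is at least `Var X / (1 + s)`. The characteristic polynomial takes the value `-m² Var X ≤ 0`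
at `Var X`, so the eigenvalues cannot both exceed `Var X`.
-/

open MeasureTheory Real Matrix

/-- The paper's claim following Corollary 1: for a bounded real random
variable `X` (`|X| ≤ B` a.s.) and the Gram matrix
`M = E[(1, X)(1, X)ᵀ] = [[1, E X], [E X, E X²]]`, every unit vector `v`
satisfies `vᵀ M v ≥ Var(X)/(1 + B²)`, some unit vector satisfies
`vᵀ M v ≤ Var(X)`, and hence the minimum eigenvalue of `M` is proportional
to `Var(X)`: `Var(X)/(1 + B²) ≤ λ_min(M) ≤ Var(X)`. -/
theorem gram_matrix_min_eigenvalue_proportional_to_variance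
    {Ω : Type*} [MeasurableSpace Ω] (P : Measure Ω) [IsProbabilityMeasure P]
    (B : ℝ) (hB : 0 < B) (X : Ω → ℝ) (hX : Measurable X)
    (hbdd : ∀ᵐ ω ∂P, |X ω| ≤ B)
    (M : Matrix (Fin 2) (Fin 2) ℝ)
    (hM : M = !![1, ∫ ω, X ω ∂P; ∫ ω, X ω ∂P, ∫ ω, (X ω) ^ 2 ∂P])
    (hHerm : M.IsHermitian) :
    (∀ v : Fin 2 → ℝ, v 0 ^ 2 + v 1 ^ 2 = 1 →
      ((∫ ω, (X ω) ^ 2 ∂P) - (∫ ω, X ω ∂P) ^ 2) / (1 + B ^ 2) ≤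
        v ⬝ᵥ M.mulVec v) ∧
    (∃ v : Fin 2 → ℝ, v 0 ^ 2 + v 1 ^ 2 = 1 ∧
      v ⬝ᵥ M.mulVec v ≤ (∫ ω, (X ω) ^ 2 ∂P) - (∫ ω, X ω ∂P) ^ 2) ∧
    ((∫ ω, (X ω) ^ 2 ∂P) - (∫ ω, X ω ∂P) ^ 2) / (1 + B ^ 2) ≤
      (⨅ i, hHerm.eigenvalues i) ∧
    (⨅ i, hHerm.eigenvalues i) ≤
      (∫ ω, (X ω) ^ 2 ∂P) - (∫ ω, X ω ∂P) ^ 2 := by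
  have hint : Integrable X P :=
    Integrable.of_bound hX.aestronglyMeasurable B (by simpa using hbdd)
  have hsq : ∀ᵐ ω ∂P, X ω ^ 2 ≤ B ^ 2 := by
    filter_upwards [hbdd] with ω h
    exact sq_le_sq' (abs_le.mp h).1 (abs_le.mp h).2
  have hint2 : Integrable (fun ω => X ω ^ 2) P := by
    refine Integrable.of_bound (hX.pow_const 2).aestronglyMeasurable (B ^ 2) ?_
    filter_upwards [hsq] with ω h
    simpa using h
  have hsB : ∫ ω, X ω ^ 2 ∂P ≤ B ^ 2 := by
    have h := integral_mono_ae hint2 (integrable_const (B ^ 2)) hsq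
    simpa using h
  have hV : 0 ≤ (∫ ω, X ω ^ 2 ∂P) - (∫ ω, X ω ∂P) ^ 2 := by
    have hmem : MemLp X 2 P := (memLp_two_iff_integrable_sq hX.aestronglyMeasurable).2 hint2
    have h := ProbabilityTheory.variance_nonneg X P
    rw [ProbabilityTheory.variance_eq_sub hmem] at h
    simpa using h
  have htr : M.trace = 1 + ∫ ω, X ω ^ 2 ∂P := by
    rw [hM, Matrix.trace_fin_two]; simp
  have hdet : M.det = (∫ ω, X ω ^ 2 ∂P) - (∫ ω, X ω ∂P) ^ 2 := by
    rw [hM, Matrix.det_fin_two]; simp; ring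
  rw [hHerm.trace_eq_sum_eigenvalues] at htr
  rw [hHerm.det_eq_prod_eigenvalues] at hdet
  simp only [Fin.sum_univ_two, Fin.prod_univ_two, RCLike.ofReal_real_eq_id, id] at htr hdet
  have hQ : ∀ v : Fin 2 → ℝ, v ⬝ᵥ M.mulVec v =
      v 0 ^ 2 + 2 * v 0 * v 1 * (∫ ω, X ω ∂P) + v 1 ^ 2 * ∫ ω, X ω ^ 2 ∂P := by
    intro v
    rw [hM]
    simp [dotProduct, Matrix.mulVec, Fin.sum_univ_two]
    ring
  have hs0 : 0 ≤ ∫ ω, X ω ^ 2 ∂P := integral_nonneg fun ω => sq_nonneg _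
  generalize (∫ ω, X ω ^ 2 ∂P) = s at *
  generalize (∫ ω, X ω ∂P) = m at *
  have hle : (s - m ^ 2) / (1 + B ^ 2) ≤ (s - m ^ 2) / (1 + s) := by gcongr
  refine ⟨fun v hv => ?_, ?_, ?_, ?_⟩
  · refine hle.trans ?_
    rw [hQ, div_le_iff₀ (by positivity)]
    -- The difference of the two sides is `‖Mv‖²`, by Cayley–Hamilton.
    have key : (v 0 ^ 2 + 2 * v 0 * v 1 * m + v 1 ^ 2 * s) * (1 + s)
        = (s - m ^ 2) * (v 0 ^ 2 + v 1 ^ 2)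
          + ((v 0 + m * v 1) ^ 2 + (m * v 0 + s * v 1) ^ 2) := by ring
    rw [key, hv, mul_one]
    exact le_add_of_nonneg_right (by positivity)
  · have hr : √(1 + m ^ 2) ^ 2 = 1 + m ^ 2 := Real.sq_sqrt (by positivity)
    have hr0 : 0 < √(1 + m ^ 2) := Real.sqrt_pos.2 (by positivity)
    refine ⟨![-m / √(1 + m ^ 2), 1 / √(1 + m ^ 2)], ?_, ?_⟩
    · simp only [Matrix.cons_val_zero, Matrix.cons_val_one, div_pow, hr]
      field_simp
      ring
    · rw [hQ]
      simp only [Matrix.cons_val_zero, Matrix.cons_val_one]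
      have h : (-m / √(1 + m ^ 2)) ^ 2 + 2 * (-m / √(1 + m ^ 2)) * (1 / √(1 + m ^ 2)) * m
          + (1 / √(1 + m ^ 2)) ^ 2 * s = (s - m ^ 2) / √(1 + m ^ 2) ^ 2 := by
        field_simp
        ring
      rw [h, hr]
      exact div_le_self hV (by nlinarith [sq_nonneg m])
  · refine hle.trans (le_ciInf fun i => ?_)
    rw [div_le_iff₀ (by positivity)]
    generalize hHerm.eigenvalues = l at *
    -- Nonnegative product and positive sum force both eigenvalues to be nonnegative.
    have h0 : 0 ≤ l 0 := by
      by_contra! h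
      nlinarith
    have h1 : 0 ≤ l 1 := by
      by_contra! h
      nlinarith
    fin_cases i <;> simp only [Fin.zero_eta, Fin.mk_one] <;> nlinarith
  · have hb : BddBelow (Set.range hHerm.eigenvalues) := (Set.finite_range _).bddBelow
    by_contra! h
    have h0 := h.trans_le (ciInf_le hb 0)
    have h1 := h.trans_le (ciInf_le hb 1)
    -- The characteristic polynomial at `Var X` would be positive, yet it equals `-m² Var X`.
    have hp := mul_pos (sub_pos.2 h0) (sub_pos.2 h1)
    have e : (hHerm.eigenvalues 0 - (s - m ^ 2)) * (hHerm.eigenvalues 1 - (s - m ^ 2))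
        = -(m ^ 2 * (s - m ^ 2)) := by
      linear_combination hdet - (s - m ^ 2) * htr
    rw [e] at hp
    linarith [mul_nonneg (sq_nonneg m) hV]
end
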